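/- Let U be a k-dimensional F_q-subspace of F_{q^n} with 1 ∈ U. Then |orb(U)| = (q^n − 1)/(q^k − 1) if and only if U = F_{q^k} (in particular, this forces k to divide n). Furthermore, if k divides n and k < n, then d_S(orb(F_{q^k})) = 2k. -/

import Mathlib

/-! The group `Kˣ` acts on the `F`-subspaces of `K` by multiplication, and `orb U` is the orbit
of `U`.  By orbit-stabilizer, `|orb U| * |Stab U| = q ^ n - 1`.  Since `1 ∈ U`, every `c ∈ Stab U`
satisfies `c = c * 1 ∈ U`, so `Stab U ⊆ U \ {0}` and `|Stab U| ≤ q ^ k - 1`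
(`stabilizer_subset`, `ncard_diff_zero`).  The value `(q ^ n - 1) / (q ^ k - 1)` for the orbit size,
even when read as a floor, forces equality here, so that `U \ {0}` is the stabilizer; in
particular it is a multiplicative group and `U` is a field (`exists_field_of_stabilizer`).
Conversely, the stabilizer of a subfield `E` is `E \ {0}`.  Finally, two cosets `E γ`, `E δ` sharing
a nonzero element are equal, so distinct members of `orb E` intersect trivially and every distance
is `2 k`. -/

/-- The subspace `Uγ = {uγ : u ∈ U}` of the `F`-vector space `K`. -/
def mulMap (F K : Type) [Field F] [Field K] [Algebra F K] (γ : K) (U : Submodule F K) :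
    Submodule F K :=
  U.map (LinearMap.mulRight F γ)

/-- The cyclic orbit code `orb(U) = {Uγ : γ ∈ K^*}`. -/
def orb (F K : Type) [Field F] [Field K] [Algebra F K] (U : Submodule F K) :
    Set (Submodule F K) :=
  {V : Submodule F K | ∃ γ : K, γ ≠ 0 ∧ V = mulMap F K γ U}

/-- The subspace distance `d_S(V,W) = dim V + dim W − 2 dim (V ∩ W)`. -/
noncomputable def sdist (F : Type) [Field F] {M : Type} [AddCommGroup M] [Module F M]
    (V W : Submodule F M) : ℕ :=
  Module.finrank F ↥V + Module.finrank F ↥W - 2 * Module.finrank F ↥(V ⊓ W)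

/-- The subspace distance of a code: `d_S(C) = min {d_S(V,W) : V,W ∈ C, V ≠ W}`. -/
noncomputable def cdist (F : Type) [Field F] {M : Type} [AddCommGroup M] [Module F M]
    (C : Set (Submodule F M)) : ℕ :=
  sInf {d : ℕ | ∃ V ∈ C, ∃ W ∈ C, V ≠ W ∧ d = sdist F V W}

open scoped Pointwise in
lemma mulMap_units (F K : Type) [Field F] [Field K] [Algebra F K] (γ : Kˣ) (U : Submodule F K) :
    mulMap F K (γ : K) U = γ • U := by
  ext x
  simp [mulMap, Submodule.mem_smul_pointwise_iff_exists, Units.smul_def, mul_comm]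

open scoped Pointwise in
lemma orb_eq_orbit (F K : Type) [Field F] [Field K] [Algebra F K] (U : Submodule F K) :
    orb F K U = MulAction.orbit Kˣ U := by
  ext V
  constructor
  · rintro ⟨γ, hγ, rfl⟩
    exact ⟨Units.mk0 γ hγ, (mulMap_units F K (Units.mk0 γ hγ) U).symm⟩
  · rintro ⟨γ, rfl⟩
    exact ⟨γ, γ.ne_zero, (mulMap_units F K γ U).symm⟩

open scoped Pointwise in
/-- Orbit-stabilizer, with the stabilizer viewed as a subset of `K`. -/
lemma ncard_orb_mul (F K : Type) [Field F] [Field K] [Finite K] [Algebra F K]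
    (U : Submodule F K) :
    (orb F K U).ncard * (Units.val '' (MulAction.stabilizer Kˣ U : Set Kˣ)).ncard
      = Nat.card K - 1 := by
  have h1 : (Units.val '' (MulAction.stabilizer Kˣ U : Set Kˣ)).ncard
      = Nat.card (MulAction.stabilizer Kˣ U) := by
    rw [Set.ncard_image_of_injective _ Units.val_injective]
    rfl
  rw [h1, orb_eq_orbit, ← Nat.card_units K]
  have := Nat.card_congr (MulAction.orbitProdStabilizerEquivGroup Kˣ U)
  rw [Nat.card_prod] at this
  exact this

open scoped Pointwise in
lemma stabilizer_subset (F K : Type) [Field F] [Field K] [Algebra F K]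
    (U : Submodule F K) (hU1 : (1 : K) ∈ U) :
    Units.val '' (MulAction.stabilizer Kˣ U : Set Kˣ) ⊆ (U : Set K) \ {0} := by
  rintro _ ⟨c, hc, rfl⟩
  refine ⟨?_, by simp⟩
  have hc' : c • U = U := hc
  have : c • (1 : K) ∈ c • U := Submodule.smul_mem_pointwise_smul _ _ _ hU1
  rw [hc'] at this
  simpa [Units.smul_def] using this

lemma ncard_diff_zero (F K : Type) [Field F] [Field K] [Finite F] [Finite K] [Algebra F K]
    (U : Submodule F K) :
    ((U : Set K) \ {0}).ncard = Nat.card F ^ Module.finrank F U - 1 := by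
  rw [Set.ncard_sdiff_singleton_of_mem U.zero_mem]
  congr 1
  exact Module.natCard_eq_pow_finrank (K := F) (V := U)

open scoped Pointwise in
lemma exists_field_of_stabilizer (F K : Type) [Field F] [Field K] [Algebra F K]
    (U : Submodule F K) (hU1 : (1 : K) ∈ U)
    (h : Units.val '' (MulAction.stabilizer Kˣ U : Set Kˣ) = (U : Set K) \ {0}) :
    ∃ E : IntermediateField F K, (E : Set K) = (U : Set K) := by
  have hmul : ∀ {a b : K}, a ∈ U → b ∈ U → a * b ∈ U := by
    intro a b ha hb
    by_cases h0 : a = 0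
    · simp [h0]
    have : a ∈ (U : Set K) \ {0} := ⟨ha, h0⟩
    rw [← h] at this
    obtain ⟨c, hc, rfl⟩ := this
    have hc' : c • U = U := hc
    have : c • b ∈ c • U := Submodule.smul_mem_pointwise_smul _ _ _ hb
    rwa [hc'] at this
  have hinv : ∀ a ∈ U, a⁻¹ ∈ U := by
    intro a ha
    by_cases h0 : a = 0
    · simp [h0]
    have : a ∈ (U : Set K) \ {0} := ⟨ha, h0⟩
    rw [← h] at this
    obtain ⟨c, hc, rfl⟩ := this
    rw [← Units.val_inv_eq_inv_val]
    exact (stabilizer_subset F K U hU1 ⟨c⁻¹, inv_mem hc, rfl⟩).1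
  exact ⟨(U.toSubalgebra hU1 fun _ _ => hmul).toIntermediateField hinv, rfl⟩

open scoped Pointwise in
lemma stabilizer_of_field (F K : Type) [Field F] [Field K] [Algebra F K]
    (U : Submodule F K) (E : IntermediateField F K) (hE : (E : Set K) = U) :
    Units.val '' (MulAction.stabilizer Kˣ U : Set Kˣ) = (U : Set K) \ {0} := by
  have hm : ∀ x, x ∈ U ↔ x ∈ E := fun x => (Set.ext_iff.mp hE x).symm
  refine (stabilizer_subset F K U ((hm 1).2 (one_mem E))).antisymm ?_
  rintro a ⟨ha, h0 : a ≠ 0⟩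
  have ha' : a ∈ E := (hm a).1 ha
  refine ⟨Units.mk0 a h0, ?_, rfl⟩
  rw [SetLike.mem_coe, MulAction.mem_stabilizer_iff]
  ext x
  rw [← mulMap_units, mulMap, Submodule.mem_map, hm]
  constructor
  · rintro ⟨y, hy, rfl⟩
    exact mul_mem ((hm y).1 hy) ha'
  · intro hx
    exact ⟨x / a, (hm _).2 (div_mem hx ha'), div_mul_cancel₀ x h0⟩

lemma finrank_of_card (F K : Type) [Field F] [Field K] [Finite F] [Finite K] [Algebra F K]
    (E : IntermediateField F K) (k : ℕ) (h : Nat.card E = Nat.card F ^ k) :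
    Module.finrank F E = k := by
  rw [Module.natCard_eq_pow_finrank (K := F) (V := E)] at h
  exact Nat.pow_right_injective Finite.one_lt_card h

lemma mem_mulMap_field (F K : Type) [Field F] [Field K] [Algebra F K]
    (E : IntermediateField F K) {γ : K} (hγ : γ ≠ 0) (x : K) :
    x ∈ mulMap F K γ (Subalgebra.toSubmodule E.toSubalgebra) ↔ x / γ ∈ E := by
  simp only [mulMap, Submodule.mem_map]
  constructor
  · rintro ⟨y, hy, rfl⟩
    simpa [hγ] using hy
  · intro h
    exact ⟨x / γ, h, by simp [hγ]⟩

lemma finrank_mulMap (F K : Type) [Field F] [Field K] [Algebra F K]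
    {γ : K} (hγ : γ ≠ 0) (U : Submodule F K) :
    Module.finrank F (mulMap F K γ U) = Module.finrank F U :=
  (Submodule.equivMapOfInjective (LinearMap.mulRight F γ) (mul_left_injective₀ hγ) U).finrank_eq.symm

lemma mulMap_inf_eq_bot (F K : Type) [Field F] [Field K] [Algebra F K]
    (E : IntermediateField F K) {γ δ : K} (hγ : γ ≠ 0) (hδ : δ ≠ 0)
    (hne : mulMap F K γ (Subalgebra.toSubmodule E.toSubalgebra)
      ≠ mulMap F K δ (Subalgebra.toSubmodule E.toSubalgebra)) :
    mulMap F K γ (Subalgebra.toSubmodule E.toSubalgebra)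
      ⊓ mulMap F K δ (Subalgebra.toSubmodule E.toSubalgebra) = ⊥ := by
  rw [Submodule.eq_bot_iff]
  rintro x ⟨h1, h2⟩
  rw [SetLike.mem_coe, mem_mulMap_field F K E hγ] at h1
  rw [SetLike.mem_coe, mem_mulMap_field F K E hδ] at h2
  by_contra hx
  -- a common nonzero element gives `γ / δ ∈ E`, hence equal cosets
  have h3 : γ / δ ∈ E := by
    have : γ / δ = (x / δ) / (x / γ) := by field_simp
    rw [this]
    exact div_mem h2 h1
  apply hne
  ext y
  rw [mem_mulMap_field F K E hγ, mem_mulMap_field F K E hδ]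
  constructor
  · intro h
    have : y / δ = (y / γ) * (γ / δ) := by field_simp
    rw [this]
    exact mul_mem h h3
  · intro h
    have : y / γ = (y / δ) / (γ / δ) := by field_simp
    rw [this]
    exact div_mem h h3

lemma cdist_orb_field (F K : Type) [Field F] [Field K] [Algebra F K]
    (E : IntermediateField F K) (hE : E ≠ ⊤) :
    cdist F (orb F K (Subalgebra.toSubmodule E.toSubalgebra)) = 2 * Module.finrank F E := by
  have key : ∀ γ δ : K, γ ≠ 0 → δ ≠ 0 →
      mulMap F K γ (Subalgebra.toSubmodule E.toSubalgebra)
        ≠ mulMap F K δ (Subalgebra.toSubmodule E.toSubalgebra) →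
      sdist F (mulMap F K γ (Subalgebra.toSubmodule E.toSubalgebra))
        (mulMap F K δ (Subalgebra.toSubmodule E.toSubalgebra)) = 2 * Module.finrank F E := by
    intro γ δ hγ hδ hne
    have hr : Module.finrank F (Subalgebra.toSubmodule E.toSubalgebra) = Module.finrank F E := rfl
    rw [sdist, mulMap_inf_eq_bot F K E hγ hδ hne, finrank_mulMap F K hγ, finrank_mulMap F K hδ,
      hr, finrank_bot]
    omega
  obtain ⟨γ, hγE⟩ : ∃ γ : K, γ ∉ E := by
    by_contra! h
    exact hE (eq_top_iff.2 fun x _ => h x)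
  have hγ : γ ≠ 0 := fun h => hγE (h ▸ zero_mem E)
  have hne : mulMap F K γ (Subalgebra.toSubmodule E.toSubalgebra)
      ≠ mulMap F K 1 (Subalgebra.toSubmodule E.toSubalgebra) := by
    intro h
    have h1 := (mem_mulMap_field F K E hγ γ).2 (by simp [hγ])
    rw [h, mem_mulMap_field F K E one_ne_zero, div_one] at h1
    exact hγE h1
  have hset : {d : ℕ | ∃ V ∈ orb F K (Subalgebra.toSubmodule E.toSubalgebra),
      ∃ W ∈ orb F K (Subalgebra.toSubmodule E.toSubalgebra), V ≠ W ∧ d = sdist F V W}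
      = {2 * Module.finrank F E} := by
    ext d
    constructor
    · rintro ⟨_, ⟨γ', h1, rfl⟩, _, ⟨δ', h2, rfl⟩, h3, rfl⟩
      exact key γ' δ' h1 h2 h3
    · rintro rfl
      exact ⟨_, ⟨γ, hγ, rfl⟩, _, ⟨1, one_ne_zero, rfl⟩, hne, (key γ 1 hγ one_ne_zero hne).symm⟩
  rw [cdist, hset, csInf_singleton]

/-- Let `U` be a `k`-dimensional `F_q`-subspace of `F_{q^n}` with `1 ∈ U`.
Then `|orb(U)| = (q^n − 1)/(q^k − 1)` iff `U = F_{q^k}`, i.e. iff `U` is the subfield of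
`F_{q^n}` with `q^k` elements (in particular this forces `k ∣ n`).  Furthermore, if
`k ∣ n` and `k < n`, then `d_S(orb(F_{q^k})) = 2k`. -/
theorem stmt5 (q n k : ℕ) (F K : Type) [Field F] [Field K] [Finite F] [Finite K] [Algebra F K]
    (hq : Nat.card F = q) (hn : Module.finrank F K = n)
    (U : Submodule F K) (hUk : Module.finrank F ↥U = k) (hU1 : (1 : K) ∈ U) :
    (Set.ncard (orb F K U) = (q ^ n - 1) / (q ^ k - 1) ↔
      (∃ E : IntermediateField F K, (E : Set K) = (U : Set K) ∧ Nat.card ↥E = q ^ k) ∧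
        k ∣ n) ∧
    (k ∣ n → k < n → ∀ E : IntermediateField F K, Nat.card ↥E = q ^ k →
      cdist F (orb F K (Subalgebra.toSubmodule E.toSubalgebra)) = 2 * k) := by
  subst hq hn hUk
  have hcK : Nat.card K = Nat.card F ^ Module.finrank F K :=
    Module.natCard_eq_pow_finrank (K := F) (V := K)
  have hcU : Nat.card U = Nat.card F ^ Module.finrank F U :=
    Module.natCard_eq_pow_finrank (K := F) (V := U)
  have horb := ncard_orb_mul F K U
  have hdiff := ncard_diff_zero F K U
  rw [hcK] at horb
  refine ⟨⟨fun h => ?_, ?_⟩, ?_⟩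
  · -- the product in orbit-stabilizer is positive, so the orbit is nonempty and can be cancelled
    have hpos : 0 < Nat.card F ^ Module.finrank F K - 1 := by
      rw [← hcK]
      exact Nat.sub_pos_of_lt Finite.one_lt_card
    have ho : 0 < (orb F K U).ncard := by
      rcases Nat.eq_zero_or_pos (orb F K U).ncard with h0 | h0
      · rw [h0, zero_mul] at horb
        omega
      · exact h0
    have hle : (orb F K U).ncard * (Nat.card F ^ Module.finrank F U - 1)
        ≤ Nat.card F ^ Module.finrank F K - 1 := by
      rw [h]
      exact Nat.div_mul_le_self _ _
    rw [← horb] at hle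
    have hst := Set.eq_of_subset_of_ncard_le (stabilizer_subset F K U hU1)
      (hdiff ▸ Nat.le_of_mul_le_mul_left hle ho) (Set.toFinite _)
    obtain ⟨E, hE⟩ := exists_field_of_stabilizer F K U hU1 hst
    have hcE : Nat.card E = Nat.card F ^ Module.finrank F U := by
      rw [← hcU]
      exact congrArg (fun s : Set K => s.ncard) hE
    refine ⟨⟨E, hE, hcE⟩, ?_⟩
    rw [← finrank_of_card F K E _ hcE]
    exact ⟨_, (Module.finrank_mul_finrank F E K).symm⟩
  · rintro ⟨⟨E, hE, -⟩, -⟩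
    rw [stabilizer_of_field F K U E hE, hdiff] at horb
    have hpos : 0 < Nat.card F ^ Module.finrank F U - 1 := by
      rw [← hdiff, Set.ncard_pos]
      exact ⟨1, hU1, one_ne_zero⟩
    rw [← horb, Nat.mul_div_cancel _ hpos]
  · intro _ hlt E hE
    have hr := finrank_of_card F K E _ hE
    rw [cdist_orb_field F K E ?_, hr]
    rintro rfl
    rw [IntermediateField.finrank_top'] at hr
    omega
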